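/- Every exact-repair regenerating code with parameters (n,k,d) = (4,3,3) and secondary parameters (B,α,β) satisfies 3B ≤ 4α + 6β (equivalently, 3B ≤ 2B_1 + B_2 − β). -/

import Mathlib

open Finset

/-- Shannon entropy (base 2) of a finitely-valued random variable `X` on a finite
probability space with mass function `P`. -/
noncomputable def entH {Ω S : Type*} [Fintype Ω] (P : Ω → ℝ) (X : Ω → S) : ℝ :=
  letI := Classical.decEq S
  ∑ s ∈ Finset.univ.image X,
    -((∑ ω ∈ Finset.univ.filter (fun ω => X ω = s), P ω) *
       Real.logb 2 (∑ ω ∈ Finset.univ.filter (fun ω => X ω = s), P ω))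

/-- Conditional entropy `H(X | Y) = H(X, Y) - H(Y)`. -/
noncomputable def condH {Ω S T : Type*} [Fintype Ω] (P : Ω → ℝ) (X : Ω → S) (Y : Ω → T) : ℝ :=
  entH P (fun ω => (X ω, Y ω)) - entH P Y

/-- The joint random variable `W_J = (W_j : j ∈ J)`. -/
def jointW {Ω : Type*} {n : ℕ} {σW : Fin n → Type*} (W : ∀ j, Ω → σW j)
    (J : Finset (Fin n)) : Ω → ∀ j : J, σW j.1 :=
  fun ω j => W j.1 ω

/-- The joint random variable `(S_i^j : (i,j) ∈ E)` for a set `E` of pairs. -/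
def jointS {Ω : Type*} {n : ℕ} {σS : Fin n → Fin n → Type*} (S : ∀ i j, Ω → σS i j)
    (E : Finset (Fin n × Fin n)) : Ω → ∀ e : E, σS e.1.1 e.1.2 :=
  fun ω e => S e.1.1 e.1.2 ω

/-- The joint random variable `S_I^j = (S_i^j : i ∈ I)`. -/
def jointSto {Ω : Type*} {n : ℕ} {σS : Fin n → Fin n → Type*} (S : ∀ i j, Ω → σS i j)
    (I : Finset (Fin n)) (j : Fin n) : Ω → ∀ i : I, σS i.1 j :=
  fun ω i => S i.1 j ω

/-- An exact-repair regenerating code with parameters `(n,k,d)` (with `1 ≤ k ≤ d ≤ n-1`)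
and secondary parameters `(B,α,β)`: the file `M`, the stored data `W j` on server `j`
(servers indexed by `Fin n`, server `j` of the paper being index `j-1`), and the helper
information `S i j` sent from server `i` to repair server `j`. -/
structure IsRegenCode {Ω : Type*} [Fintype Ω] (n k d : ℕ) (B α β : ℝ) (P : Ω → ℝ)
    {σM : Type*} {σW : Fin n → Type*} {σS : Fin n → Fin n → Type*}
    (M : Ω → σM) (W : ∀ j, Ω → σW j) (S : ∀ i j, Ω → σS i j) : Prop where
  prob_nonneg : ∀ ω, 0 ≤ P ω
  prob_sum : ∑ ω, P ω = 1
  hk : 1 ≤ k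
  hkd : k ≤ d
  hdn : d + 1 ≤ n
  hB : 0 ≤ B
  hα : 0 ≤ α
  hβ : 0 ≤ β
  hMB : entH P M = B
  hWα : ∀ j, entH P (W j) = α
  hWM : ∀ j, condH P (W j) M = 0
  hMW : ∀ J : Finset (Fin n), k ≤ J.card → condH P M (jointW W J) = 0
  hSβ : ∀ i j, i ≠ j → entH P (S i j) = β
  hSW : ∀ i j, i ≠ j → condH P (S i j) (W i) = 0
  hWS : ∀ (j : Fin n) (I : Finset (Fin n)), d ≤ I.card → j ∉ I →
    condH P (W j) (jointSto S I j) = 0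

/-- `B_q = qα + ((k-q)(k-q-1)/2)β + (d+1-k)(k-q)β`. -/
noncomputable def Bfun (k d q : ℕ) (α β : ℝ) : ℝ :=
  (q : ℝ) * α + (((k - q) * (k - q - 1) : ℕ) : ℝ) / 2 * β
    + (((d + 1 - k) * (k - q) : ℕ) : ℝ) * β

/-! ### Entropy of equivalence relations

A finitely-valued random variable carries the information of its kernel, so entropy is
studied as a function on the lattice `Setoid Ω`, where joint variables become infima. -/

section SetoidEntropy

variable {Ω : Type*} [Fintype Ω]

open Classical in
/-- The mass of the class of `ω` under the equivalence relation `r`. -/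
noncomputable def classMass (P : Ω → ℝ) (r : Setoid Ω) (ω : Ω) : ℝ :=
  ∑ ω', if r ω ω' then P ω' else 0

/-- Shannon entropy (base 2) of the partition given by `r`. -/
noncomputable def setoidEntropy (P : Ω → ℝ) (r : Setoid Ω) : ℝ :=
  ∑ ω, -(P ω * Real.logb 2 (classMass P r ω))

theorem entH_eq_setoidEntropy {S : Type*} (P : Ω → ℝ) (X : Ω → S) :
    entH P X = setoidEntropy P (Setoid.ker X) := by
  classical
  unfold entH setoidEntropy
  have key : ∀ ω, (∑ ω' ∈ univ.filter (fun ω' => X ω' = X ω), P ω') =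
      classMass P (Setoid.ker X) ω := by
    intro ω
    rw [Finset.sum_filter]
    refine Finset.sum_congr rfl fun ω' _ => ?_
    simp [Setoid.ker_def, eq_comm]
  convert Finset.sum_image' (s := univ) (g := X)
    (f := fun s => -((∑ ω ∈ univ.filter (fun ω => X ω = s), P ω) *
       Real.logb 2 (∑ ω ∈ univ.filter (fun ω => X ω = s), P ω)))
    (fun ω => -(P ω * Real.logb 2 (classMass P (Setoid.ker X) ω))) ?_
  intro ω _
  rw [Finset.sum_neg_distrib, neg_inj, Finset.sum_mul]
  refine Finset.sum_congr rfl fun ω' hω' => ?_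
  rw [← key ω', (Finset.mem_filter.1 hω').2]

theorem classMass_congr (P : Ω → ℝ) {r s : Setoid Ω} (hrs : r ≤ s) {ω ω' : Ω} (h : r ω ω') :
    classMass P s ω = classMass P s ω' := by
  classical
  unfold classMass
  refine Finset.sum_congr rfl fun x _ => ?_
  have : s ω x ↔ s ω' x :=
    ⟨fun hx => s.trans' (s.symm' (hrs h)) hx, fun hx => s.trans' (hrs h) hx⟩
  exact if_congr this rfl rfl

variable {P : Ω → ℝ} (hP : ∀ ω, 0 ≤ P ω)

include hP

theorem classMass_nonneg (r : Setoid Ω) (ω : Ω) : 0 ≤ classMass P r ω :=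
  Finset.sum_nonneg fun x _ => by split_ifs <;> simp [hP]

theorem le_classMass (r : Setoid Ω) (ω : Ω) : P ω ≤ classMass P r ω := by
  classical
  have := Finset.single_le_sum (f := fun ω' => if r ω ω' then P ω' else 0)
    (fun x _ => by split_ifs <;> simp [hP]) (Finset.mem_univ ω)
  simp only [r.refl', if_true] at this
  exact this

theorem classMass_mono {r s : Setoid Ω} (hrs : r ≤ s) (ω : Ω) :
    classMass P r ω ≤ classMass P s ω := by
  refine Finset.sum_le_sum fun x _ => ?_
  by_cases h : r ω x
  · simp [h, hrs h]
  · simp only [h, if_false]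
    split_ifs <;> simp [hP]

theorem setoidEntropy_anti {r s : Setoid Ω} (hrs : r ≤ s) :
    setoidEntropy P s ≤ setoidEntropy P r := by
  refine Finset.sum_le_sum fun ω _ => neg_le_neg ?_
  rcases (hP ω).eq_or_lt with h | h
  · simp [← h]
  · exact mul_le_mul_of_nonneg_left (Real.logb_le_logb_of_le one_lt_two
      (h.trans_le (le_classMass hP r ω)) (classMass_mono hP hrs ω)) h.le

omit hP in
/-- An `r`-class and an `s`-class meet in at most one class of `r ⊓ s`, whose normalized
masses add up to at most one. -/
theorem sum_div_classMass_le (r s t : Setoid Ω) (hr : r ≤ t) (hs : s ≤ t) (x y : Ω) :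
    (∑ ω, open Classical in
      if r ω x ∧ s ω y then P ω / classMass P (r ⊓ s) ω else 0) ≤
      open Classical in if t x y then 1 else 0 := by
  classical
  by_cases hex : ∃ z, r z x ∧ s z y
  · obtain ⟨z, hzx, hzy⟩ := hex
    rw [if_pos (t.trans' (t.symm' (hr hzx)) (hs hzy))]
    have : ∀ ω, (if r ω x ∧ s ω y then P ω / classMass P (r ⊓ s) ω else 0) =
        (if (r ⊓ s) z ω then P ω else 0) / classMass P (r ⊓ s) z := by
      intro ω
      by_cases h : (r ⊓ s) z ω
      · rw [if_pos h, classMass_congr P le_rfl h, if_pos]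
        exact ⟨r.trans' (r.symm' h.1) hzx, s.trans' (s.symm' h.2) hzy⟩
      · rw [if_neg h, if_neg, zero_div]
        rintro ⟨h1, h2⟩
        exact h ⟨r.trans' hzx (r.symm' h1), s.trans' hzy (s.symm' h2)⟩
    simp_rw [this]
    rw [← Finset.sum_div]
    exact div_self_le_one _
  · push Not at hex
    rw [Finset.sum_eq_zero]
    · split_ifs <;> norm_num
    · intro ω _
      rw [if_neg]
      rintro ⟨h1, h2⟩
      exact hex ω h1 h2

theorem sum_mul_classMass_div_le (r s t : Setoid Ω) (hr : r ≤ t) (hs : s ≤ t) :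
    ∑ ω, P ω * (classMass P r ω * classMass P s ω /
      (classMass P (r ⊓ s) ω * classMass P t ω)) ≤ ∑ ω, P ω := by
  classical
  have expand : ∀ ω, P ω * (classMass P r ω * classMass P s ω /
      (classMass P (r ⊓ s) ω * classMass P t ω)) =
      ∑ x, ∑ y, P x / classMass P t x * P y *
        (if r ω x ∧ s ω y then P ω / classMass P (r ⊓ s) ω else 0) := by
    intro ω
    have : P ω * (classMass P r ω * classMass P s ω /
        (classMass P (r ⊓ s) ω * classMass P t ω)) =
        P ω / classMass P (r ⊓ s) ω / classMass P t ω *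
          (classMass P r ω * classMass P s ω) := by
      rw [div_div]; ring
    rw [this]
    conv_lhs => rw [classMass.eq_1 P r, classMass.eq_1 P s]
    rw [Finset.sum_mul_sum, Finset.mul_sum]
    refine Finset.sum_congr rfl fun x _ => ?_
    rw [Finset.mul_sum]
    refine Finset.sum_congr rfl fun y _ => ?_
    by_cases h1 : r ω x
    · by_cases h2 : s ω y
      · rw [classMass_congr P hr h1]
        simp only [h1, h2, and_self, if_true]
        ring
      · simp [h2]
    · simp [h1]
  simp_rw [expand]
  rw [Finset.sum_comm]
  refine Finset.sum_le_sum fun x _ => ?_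
  rw [Finset.sum_comm]
  calc _ ≤ ∑ y, P x / classMass P t x * P y * (if t x y then 1 else 0) := by
        refine Finset.sum_le_sum fun y _ => ?_
        rw [← Finset.mul_sum]
        exact mul_le_mul_of_nonneg_left (sum_div_classMass_le r s t hr hs x y)
          (mul_nonneg (div_nonneg (hP x) (classMass_nonneg hP t x)) (hP y))
    _ = P x / classMass P t x * classMass P t x := by
        conv_rhs => rw [classMass.eq_1 P t]
        rw [Finset.mul_sum]
        refine Finset.sum_congr rfl fun y _ => ?_
        split_ifs <;> simp [classMass]
    _ ≤ P x := by
        rcases (hP x).eq_or_lt with h | h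
        · simp [← h]
        · exact (div_mul_cancel₀ _ (h.trans_le (le_classMass hP t x)).ne').le

/-- Submodularity of entropy. -/
theorem setoidEntropy_submodular {r s t : Setoid Ω} (hr : r ≤ t) (hs : s ≤ t) :
    setoidEntropy P (r ⊓ s) + setoidEntropy P t ≤ setoidEntropy P r + setoidEntropy P s := by
  have hlog : (0 : ℝ) < Real.log 2 := Real.log_pos one_lt_two
  have point : ∀ ω, P ω * (Real.logb 2 (classMass P r ω) + Real.logb 2 (classMass P s ω) -
      Real.logb 2 (classMass P (r ⊓ s) ω) - Real.logb 2 (classMass P t ω)) ≤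
      (P ω * (classMass P r ω * classMass P s ω /
        (classMass P (r ⊓ s) ω * classMass P t ω)) - P ω) / Real.log 2 := by
    intro ω
    rcases (hP ω).eq_or_lt with h | h
    · simp [← h]
    · have pos : ∀ q, 0 < classMass P q ω := fun q => h.trans_le (le_classMass hP q ω)
      have := Real.log_le_sub_one_of_pos
        (div_pos (mul_pos (pos r) (pos s)) (mul_pos (pos (r ⊓ s)) (pos t)))
      rw [Real.log_div (mul_pos (pos _) (pos _)).ne' (mul_pos (pos _) (pos _)).ne',
        Real.log_mul (pos _).ne' (pos _).ne', Real.log_mul (pos _).ne' (pos _).ne'] at this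
      rw [le_div_iff₀ hlog]
      simp only [Real.logb]
      have e : ∀ a b c d : ℝ, P ω * (a / Real.log 2 + b / Real.log 2 - c / Real.log 2 -
          d / Real.log 2) * Real.log 2 = P ω * (a + b - (c + d)) := by
        intro a b c d
        field_simp
        ring
      rw [e]
      calc _ ≤ P ω * _ := mul_le_mul_of_nonneg_left this h.le
        _ = _ := by ring
  have total := Finset.sum_le_sum fun ω (_ : ω ∈ univ) => point ω
  rw [← Finset.sum_div, Finset.sum_sub_distrib] at total
  have hle : (∑ ω, P ω * (classMass P r ω * classMass P s ω /
      (classMass P (r ⊓ s) ω * classMass P t ω)) - ∑ ω, P ω) / Real.log 2 ≤ 0 :=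
    div_nonpos_of_nonpos_of_nonneg
      (sub_nonpos.2 (sum_mul_classMass_div_le hP r s t hr hs)) hlog.le
  have := total.trans hle
  simp only [mul_sub, mul_add, Finset.sum_sub_distrib, Finset.sum_add_distrib] at this
  simp only [setoidEntropy, Finset.sum_neg_distrib]
  linarith

theorem setoidEntropy_inf_le (h1 : ∑ ω, P ω = 1) (r s : Setoid Ω) :
    setoidEntropy P (r ⊓ s) ≤ setoidEntropy P r + setoidEntropy P s := by
  have htop : setoidEntropy P ⊤ = 0 :=
    Finset.sum_eq_zero fun ω _ => by simp [classMass, Setoid.top_def, h1]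
  simpa [htop] using setoidEntropy_submodular hP (le_top : r ≤ ⊤) (le_top : s ≤ ⊤)

end SetoidEntropy

/-! ### Almost sure determination -/

section Determines

variable {Ω : Type*} [Fintype Ω] {P : Ω → ℝ}

/-- The partition `r` determines the partition `s` up to null sets. -/
def Determines (P : Ω → ℝ) (r s : Setoid Ω) : Prop :=
  setoidEntropy P (r ⊓ s) = setoidEntropy P r

theorem Determines.of_le {r s : Setoid Ω} (h : r ≤ s) : Determines P r s := by
  rw [Determines, inf_eq_left.2 h]

theorem Determines.of_condH_eq_zero {S T : Type*} {X : Ω → S} {Y : Ω → T}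
    (h : condH P X Y = 0) : Determines P (Setoid.ker Y) (Setoid.ker X) := by
  rw [condH, entH_eq_setoidEntropy, entH_eq_setoidEntropy, sub_eq_zero] at h
  rw [Determines, ← h]
  congr 1
  ext x y
  simp [Setoid.inf_def, Setoid.ker_def, and_comm]

variable (hP : ∀ ω, 0 ≤ P ω)

include hP

theorem Determines.mono_left {q r s : Setoid Ω} (h : Determines P r s) (hq : q ≤ r) :
    Determines P q s := by
  have h1 := setoidEntropy_submodular hP hq (inf_le_left : r ⊓ s ≤ r)
  have h2 := setoidEntropy_anti hP (inf_le_left : q ⊓ s ≤ q)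
  rw [← inf_assoc, inf_eq_left.2 hq] at h1
  unfold Determines at *
  linarith

theorem Determines.inf {r s t : Setoid Ω} (hs : Determines P r s) (ht : Determines P r t) :
    Determines P r (s ⊓ t) := by
  have := ht.mono_left hP (inf_le_left : r ⊓ s ≤ r)
  unfold Determines at *
  rw [← inf_assoc, this, hs]

theorem Determines.trans {r s t : Setoid Ω} (hs : Determines P r s) (ht : Determines P s t) :
    Determines P r t := by
  have h1 := ht.mono_left hP (inf_le_right : r ⊓ s ≤ s)
  have h2 := setoidEntropy_anti hP (inf_le_left : r ⊓ t ≤ r)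
  have h3 := setoidEntropy_anti hP (inf_le_inf_right t (inf_le_left : r ⊓ s ≤ r))
  unfold Determines at *
  linarith

theorem Determines.entropy_le {r s : Setoid Ω} (h : Determines P r s) :
    setoidEntropy P s ≤ setoidEntropy P r :=
  (setoidEntropy_anti hP inf_le_right).trans_eq h

/-- Submodularity of entropy for partitions ordered by almost sure determination. -/
theorem Determines.submodular {r s t u : Setoid Ω} (hr : Determines P r t)
    (hs : Determines P s t) (hu : Determines P (r ⊓ s) u) :
    setoidEntropy P u + setoidEntropy P t ≤ setoidEntropy P r + setoidEntropy P s := by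
  have h1 := setoidEntropy_submodular hP (inf_le_right : r ⊓ t ≤ t) (inf_le_right : s ⊓ t ≤ t)
  have h2 := (hu.mono_left hP (inf_le_inf (inf_le_left : r ⊓ t ≤ r)
    (inf_le_left : s ⊓ t ≤ s))).entropy_le hP
  rw [hr, hs] at h1
  linarith

end Determines

/-! ### The bound for four servers -/

/-- The partitions generated by the data of an exact-repair code with four servers, any
three of which recover the file and repair the fourth. -/
structure IsFourServerCode {Ω : Type*} [Fintype Ω] (B α β : ℝ) (P : Ω → ℝ)
    (m : Setoid Ω) (w : Fin 4 → Setoid Ω) (s : Fin 4 → Fin 4 → Setoid Ω) : Prop where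
  nonneg : ∀ ω, 0 ≤ P ω
  sum_eq_one : ∑ ω, P ω = 1
  entropy_file : setoidEntropy P m = B
  entropy_server : ∀ i, setoidEntropy P (w i) = α
  entropy_helper : ∀ i j, i ≠ j → setoidEntropy P (s i j) = β
  helper : ∀ i j, i ≠ j → Determines P (w i) (s i j)
  file : ∀ i j k, [i, j, k].Nodup → Determines P (w i ⊓ w j ⊓ w k) m
  repair : ∀ i j k l, [i, j, k, l].Nodup → Determines P (s i l ⊓ s j l ⊓ s k l) (w l)

theorem IsRegenCode.isFourServerCode {Ω : Type*} [Fintype Ω] {B α β : ℝ} {P : Ω → ℝ}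
    {σM : Type*} {σW : Fin 4 → Type*} {σS : Fin 4 → Fin 4 → Type*}
    {M : Ω → σM} {W : ∀ j, Ω → σW j} {S : ∀ i j, Ω → σS i j}
    (hcode : IsRegenCode 4 3 3 B α β P M W S) :
    IsFourServerCode B α β P (Setoid.ker M) (fun i => Setoid.ker (W i))
      (fun i j => Setoid.ker (S i j)) where
  nonneg := hcode.prob_nonneg
  sum_eq_one := hcode.prob_sum
  entropy_file := by rw [← entH_eq_setoidEntropy, hcode.hMB]
  entropy_server i := by rw [← entH_eq_setoidEntropy, hcode.hWα]
  entropy_helper i j hij := by rw [← entH_eq_setoidEntropy, hcode.hSβ i j hij]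
  helper i j hij := .of_condH_eq_zero (hcode.hSW i j hij)
  file i j k h := by
    refine (Determines.of_condH_eq_zero (hcode.hMW {i, j, k} ?_)).mono_left
      hcode.prob_nonneg ?_
    · rw [Finset.card_eq_three.2 ⟨i, j, k, by simp_all, by simp_all, by simp_all, rfl⟩]
    · rintro x y ⟨⟨hi, hj⟩, hk⟩
      rw [Setoid.ker_def] at *
      funext ⟨a, ha⟩
      simp only [Finset.mem_insert, Finset.mem_singleton] at ha
      rcases ha with rfl | rfl | rfl <;> assumption
  repair i j k l h := by
    refine (Determines.of_condH_eq_zero (hcode.hWS l {i, j, k} ?_ ?_)).mono_left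
      hcode.prob_nonneg ?_
    · rw [Finset.card_eq_three.2 ⟨i, j, k, by simp_all, by simp_all, by simp_all, rfl⟩]
    · simp only [List.nodup_cons, List.mem_cons, Finset.mem_insert, Finset.mem_singleton] at *
      grind
    · rintro x y ⟨⟨hi, hj⟩, hk⟩
      rw [Setoid.ker_def] at *
      funext ⟨a, ha⟩
      simp only [Finset.mem_insert, Finset.mem_singleton] at ha
      rcases ha with rfl | rfl | rfl <;> assumption

namespace IsFourServerCode

variable {Ω : Type*} [Fintype Ω] {B α β : ℝ} {P : Ω → ℝ}
  {m : Setoid Ω} {w : Fin 4 → Setoid Ω} {s : Fin 4 → Fin 4 → Setoid Ω}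

include m w s

theorem determines_helper (h : IsFourServerCode B α β P m w s) {r : Setoid Ω} {i : Fin 4}
    (hi : Determines P r (w i)) (j : Fin 4) (hij : i ≠ j) : Determines P r (s i j) :=
  hi.trans h.nonneg (h.helper i j hij)

theorem determines_file (h : IsFourServerCode B α β P m w s) {r : Setoid Ω} {i j k : Fin 4}
    (hi : Determines P r (w i)) (hj : Determines P r (w j)) (hk : Determines P r (w k))
    (hd : [i, j, k].Nodup) : Determines P r m :=
  ((hi.inf h.nonneg hj).inf h.nonneg hk).trans h.nonneg (h.file i j k hd)

theorem determines_server (h : IsFourServerCode B α β P m w s) {r : Setoid Ω} {i j k l : Fin 4}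
    (hi : Determines P r (s i l)) (hj : Determines P r (s j l)) (hk : Determines P r (s k l))
    (hd : [i, j, k, l].Nodup) : Determines P r (w l) :=
  ((hi.inf h.nonneg hj).inf h.nonneg hk).trans h.nonneg (h.repair i j k l hd)

theorem entropy_server_helpers_le (h : IsFourServerCode B α β P m w s) (i j k l : Fin 4)
    (hj : j ≠ l) (hk : k ≠ l) : setoidEntropy P (w i ⊓ s j l ⊓ s k l) ≤ α + 2 * β := by
  have h1 := setoidEntropy_inf_le h.nonneg h.sum_eq_one (w i ⊓ s j l) (s k l)
  have h2 := setoidEntropy_inf_le h.nonneg h.sum_eq_one (w i) (s j l)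
  rw [h.entropy_helper k l hk] at h1
  rw [h.entropy_helper j l hj, h.entropy_server] at h2
  linarith

/-- The messages sent by server `a`, together with the one it receives from `b`. -/
def serverHelpers (s : Fin 4 → Fin 4 → Setoid Ω) (a b c d : Fin 4) : Setoid Ω :=
  s a b ⊓ s a c ⊓ s a d ⊓ s b a

/-- The data of server `a`, the messages sent by server `b`, and the message from `c` to `b`. -/
def serverAndHelpers (w : Fin 4 → Setoid Ω) (s : Fin 4 → Fin 4 → Setoid Ω)
    (a b c d : Fin 4) : Setoid Ω :=
  w a ⊓ s b a ⊓ s b c ⊓ s b d ⊓ s c b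

/-- All helper messages of server `b`, those of server `c` to `a` and `b`, and the one from
`a` to `b`. -/
def helperSystem (s : Fin 4 → Fin 4 → Setoid Ω) (a b c d : Fin 4) : Setoid Ω :=
  s a b ⊓ s b a ⊓ s b c ⊓ s b d ⊓ s c a ⊓ s c b

theorem file_le_entropy_serverHelpers_add (h : IsFourServerCode B α β P m w s)
    {a b c d : Fin 4} (hd : [a, b, c, d].Nodup) :
    B ≤ setoidEntropy P (serverHelpers s a b c d) + α := by
  have hP := h.nonneg
  set K := serverHelpers s a b c d with hK
  rw [serverHelpers] at hK
  set V := w b ⊓ s c d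
  have wb : Determines P V (w b) := .of_le (by order)
  have wb' : Determines P (K ⊓ V) (w b) := .of_le (by order)
  have wd : Determines P (K ⊓ V) (w d) :=
    h.determines_server (i := a) (j := b) (k := c) (.of_le (by order))
      (h.determines_helper wb' d (by grind)) (.of_le (by order)) (by grind)
  have wc : Determines P (K ⊓ V) (w c) :=
    h.determines_server (i := a) (j := b) (k := d) (.of_le (by order))
      (h.determines_helper wb' c (by grind)) (h.determines_helper wd c (by grind)) (by grind)
  have e := Determines.submodular hP (.of_le (by order) : Determines P K (s b a))
    (h.determines_helper wb a (by grind)) (h.determines_file wb' wc wd (by grind))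
  have e' := setoidEntropy_inf_le hP h.sum_eq_one (w b) (s c d)
  rw [h.entropy_file, h.entropy_helper b a (by grind)] at e
  rw [h.entropy_server, h.entropy_helper c d (by grind)] at e'
  linarith

theorem entropy_serverAndHelpers_le (h : IsFourServerCode B α β P m w s)
    {a b c d : Fin 4} (hd : [a, b, c, d].Nodup) :
    setoidEntropy P (serverAndHelpers w s a b c d) ≤ α + 2 * β := by
  have hP := h.nonneg
  refine le_trans ?_ (h.entropy_server_helpers_le a c d b (by grind) (by grind))
  set T := w a ⊓ s c b ⊓ s d b
  have wa : Determines P T (w a) := .of_le (by order)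
  have wb : Determines P T (w b) :=
    h.determines_server (i := a) (j := c) (k := d)
      (h.determines_helper wa b (by grind)) (.of_le (by order)) (.of_le (by order)) (by grind)
  exact ((((wa.inf hP (h.determines_helper wb a (by grind))).inf hP
    (h.determines_helper wb c (by grind))).inf hP
    (h.determines_helper wb d (by grind))).inf hP (.of_le (by order))).entropy_le hP

theorem entropy_serverAndHelpers_inf_add_le (h : IsFourServerCode B α β P m w s)
    {a b c d : Fin 4} (hd : [a, b, c, d].Nodup) :
    setoidEntropy P (serverAndHelpers w s a b c d ⊓ s c a) +
        setoidEntropy P (serverHelpers s a b c d) ≤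
      setoidEntropy P (serverHelpers s a b c d ⊓ s c a) +
        setoidEntropy P (serverAndHelpers w s a b c d) := by
  have hP := h.nonneg
  set K := serverHelpers s a b c d with hK
  set Q := serverAndHelpers w s a b c d with hQ
  rw [serverAndHelpers] at hQ
  have wa : Determines P Q (w a) := .of_le (by order)
  refine Determines.submodular hP (.of_le inf_le_left) ?_ (.of_le (by order))
  exact (((h.determines_helper wa b (by grind)).inf hP
    (h.determines_helper wa c (by grind))).inf hP
    (h.determines_helper wa d (by grind))).inf hP (.of_le (by order))

theorem file_add_entropy_helperSystem_le (h : IsFourServerCode B α β P m w s)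
    {a b c d : Fin 4} (hd : [a, b, c, d].Nodup) :
    B + setoidEntropy P (helperSystem s a b c d) ≤
      setoidEntropy P (serverAndHelpers w s a b c d ⊓ s c a) + (α + 2 * β) := by
  have hP := h.nonneg
  refine le_trans ?_ (add_le_add_right
    (h.entropy_server_helpers_le c a d b (by grind) (by grind)) _)
  rw [← h.entropy_file]
  set T := w c ⊓ s a b ⊓ s d b
  set R := serverAndHelpers w s a b c d ⊓ s c a with hR
  rw [serverAndHelpers] at hR
  have wc : Determines P T (w c) := .of_le (by order)
  have wb : Determines P T (w b) :=
    h.determines_server (i := a) (j := c) (k := d) (.of_le (by order))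
      (h.determines_helper wc b (by grind)) (.of_le (by order)) (by grind)
  have wa : Determines P R (w a) := .of_le (by order)
  refine Determines.submodular hP ?_ ?_ ?_
  · have rest : Determines P R (s b a ⊓ s b c ⊓ s b d ⊓ s c a ⊓ s c b) := .of_le (by order)
    exact ((h.determines_helper wa b (by grind)).inf hP rest).trans hP
      (.of_le (by rw [helperSystem]; order))
  · exact (((((.of_le (by order) : Determines P T (s a b)).inf hP
      (h.determines_helper wb a (by grind))).inf hP
      (h.determines_helper wb c (by grind))).inf hP
      (h.determines_helper wb d (by grind))).inf hP
      (h.determines_helper wc a (by grind))).inf hP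
      (h.determines_helper wc b (by grind))
  · exact h.determines_file (wa.mono_left hP inf_le_left) (wb.mono_left hP inf_le_right)
      (wc.mono_left hP inf_le_right) (by grind)

theorem file_add_entropy_serverHelpers_inf_le (h : IsFourServerCode B α β P m w s)
    {a b c d : Fin 4} (hd : [a, b, c, d].Nodup) :
    B + setoidEntropy P (serverHelpers s a b c d ⊓ s c a) ≤
      setoidEntropy P (helperSystem s c a b d) + (α + 2 * β) := by
  have hP := h.nonneg
  refine le_trans ?_ (add_le_add_right
    (h.entropy_server_helpers_le d b c a (by grind) (by grind)) _)
  rw [← h.entropy_file]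
  set T := w d ⊓ s b a ⊓ s c a
  set Y := helperSystem s c a b d with hY
  rw [helperSystem] at hY
  have wd : Determines P T (w d) := .of_le (by order)
  have wa : Determines P T (w a) :=
    h.determines_server (i := b) (j := c) (k := d) (.of_le (by order)) (.of_le (by order))
      (h.determines_helper wd a (by grind)) (by grind)
  have wd' := wd.mono_left hP (inf_le_right : Y ⊓ T ≤ T)
  have wc : Determines P (Y ⊓ T) (w c) :=
    h.determines_server (i := a) (j := b) (k := d) (.of_le (by order)) (.of_le (by order))
      (h.determines_helper wd' c (by grind)) (by grind)
  refine Determines.submodular hP (.of_le (by rw [serverHelpers]; order)) ?_ ?_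
  · exact ((((h.determines_helper wa b (by grind)).inf hP
      (h.determines_helper wa c (by grind))).inf hP
      (h.determines_helper wa d (by grind))).inf hP (.of_le (by order))).inf hP
      (.of_le (by order))
  · exact h.determines_file (wa.mono_left hP inf_le_right) wc wd' (by grind)

/-- The bound, up to a cyclic relabelling of three servers. -/
theorem three_mul_add_entropy_helperSystem_le (h : IsFourServerCode B α β P m w s)
    {a b c d : Fin 4} (hd : [a, b, c, d].Nodup) :
    3 * B + setoidEntropy P (helperSystem s a b c d) ≤
      4 * α + 6 * β + setoidEntropy P (helperSystem s c a b d) := by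
  linarith [h.file_le_entropy_serverHelpers_add hd, h.entropy_serverAndHelpers_le hd,
    h.entropy_serverAndHelpers_inf_add_le hd, h.file_add_entropy_helperSystem_le hd,
    h.file_add_entropy_serverHelpers_inf_le hd]

end IsFourServerCode

/-- every `(4,3,3)` exact-repair code satisfies `3B ≤ 4α + 6β`. -/
theorem stmt_11 {Ω : Type*} [Fintype Ω] {B α β : ℝ} {P : Ω → ℝ}
    {σM : Type*} {σW : Fin 4 → Type*} {σS : Fin 4 → Fin 4 → Type*}
    {M : Ω → σM} {W : ∀ j, Ω → σW j} {S : ∀ i j, Ω → σS i j}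
    (hcode : IsRegenCode 4 3 3 B α β P M W S) :
    3 * B ≤ 4 * α + 6 * β := by
  have h := hcode.isFourServerCode
  have h1 := h.three_mul_add_entropy_helperSystem_le (a := 0) (b := 1) (c := 2) (d := 3) (by decide)
  have h2 := h.three_mul_add_entropy_helperSystem_le (a := 2) (b := 0) (c := 1) (d := 3) (by decide)
  have h3 := h.three_mul_add_entropy_helperSystem_le (a := 1) (b := 2) (c := 0) (d := 3) (by decide)
  linarith
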